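/- arXiv:2605.16876 — 2 statements merged into one kernel-verified Lean document; each statement's English description precedes it below -/
import Mathlib

section
/- Let A and B be n×n positive definite complex matrices and let t ∈ [0,1]. Then the weighted spectral geometric mean A ♮_t B = (A⁻¹ ♯ B)^t · A · (A⁻¹ ♯ B)^t is the unique positive definite matrix X satisfying (1 − t)·log(A ♯ X⁻¹) + t·log(B ♯ X⁻¹) = 0; that is, Γ((1−t, t); A, B) = { A ♮_t B }. -/
/-!
For positive definite `A`, `B`, the mean `A ♯ B` is the only positive definite solution `G` of the
Riccati equation `G A⁻¹ G = B` (`geom_posDef`, `geom_riccati`, `geom_unique`). Hence, for a positive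
definite `X`, the matrices `U = A ♯ X⁻¹` and `V = B ♯ X⁻¹` are characterised by
`U A⁻¹ U = X⁻¹ = V B⁻¹ V`, while `C = A⁻¹ ♯ B` is characterised by `C A C = B`.

Existence: for `X = Cᵗ A Cᵗ` one reads off `U = C⁻ᵗ` and `V = C¹⁻ᵗ`, and
`(1 - t) log U + t log V = 0`.

Uniqueness: given a solution `X`, put `H = log V - log U`. The equation says exactly that
`log U = -t H` and `log V = (1 - t) H`. With `W = exp H` this gives `X = Wᵗ A Wᵗ` and
`B = V X V = W A W`, so `W = C` and `X = Cᵗ A Cᵗ`.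

All functional calculus is carried out in the one-parameter group `s ↦ exp (s H)` of a Hermitian
matrix `H` (`expGroup`), as every positive definite matrix is `exp H` with `H` its logarithm.
-/

open Matrix
open scoped ComplexOrder

/-- Functional calculus for Hermitian matrices: apply `f` to the eigenvalues. -/
noncomputable def herm {n : ℕ} (f : ℝ → ℝ) (A : Matrix (Fin n) (Fin n) ℂ) :
    Matrix (Fin n) (Fin n) ℂ :=
  if hA : A.IsHermitian then
    (hA.eigenvectorUnitary : Matrix (Fin n) (Fin n) ℂ) *
      Matrix.diagonal (fun i => (f (hA.eigenvalues i) : ℂ)) *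
      (star (hA.eigenvectorUnitary : Matrix (Fin n) (Fin n) ℂ))
  else 0

/-- Square root of a positive definite matrix. -/
noncomputable def msqrt {n : ℕ} (A : Matrix (Fin n) (Fin n) ℂ) : Matrix (Fin n) (Fin n) ℂ :=
  herm Real.sqrt A

/-- Logarithm of a positive definite matrix. -/
noncomputable def mlog {n : ℕ} (A : Matrix (Fin n) (Fin n) ℂ) : Matrix (Fin n) (Fin n) ℂ :=
  herm Real.log A

/-- Real power of a positive definite matrix. -/
noncomputable def mpow {n : ℕ} (A : Matrix (Fin n) (Fin n) ℂ) (t : ℝ) :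
    Matrix (Fin n) (Fin n) ℂ :=
  herm (fun x => x ^ t) A

/-- Metric geometric mean `A ♯ B = A^{1/2} (A^{-1/2} B A^{-1/2})^{1/2} A^{1/2}`. -/
noncomputable def geom {n : ℕ} (A B : Matrix (Fin n) (Fin n) ℂ) : Matrix (Fin n) (Fin n) ℂ :=
  msqrt A * msqrt ((msqrt A)⁻¹ * B * (msqrt A)⁻¹) * msqrt A

/-- The solution set `Γ(ω; A₁,…,A_m)` of the spectral-geometric-mean equation
`∑ᵢ wᵢ log(Aᵢ ♯ X⁻¹) = 0` among positive definite matrices. -/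
noncomputable def Gamma {m n : ℕ} (w : Fin m → ℝ) (A : Fin m → Matrix (Fin n) (Fin n) ℂ) :
    Set (Matrix (Fin n) (Fin n) ℂ) :=
  {X | X.PosDef ∧ ∑ i, w i • mlog (geom (A i) X⁻¹) = 0}

/-- The one-parameter group `s ↦ exp (s H)` of a Hermitian matrix `H`, defined by functional
calculus; it is meaningful only for Hermitian `H`. -/
noncomputable def expGroup {n : ℕ} (H : Matrix (Fin n) (Fin n) ℂ) (s : ℝ) :
    Matrix (Fin n) (Fin n) ℂ :=
  cfc (fun x : ℝ => Real.exp (s * x)) H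

lemma herm_eq_cfc {n : ℕ} (f : ℝ → ℝ) {A : Matrix (Fin n) (Fin n) ℂ} (hA : A.IsHermitian) :
    herm f A = cfc f A := by
  rw [hA.cfc_eq, herm, dif_pos hA, Matrix.IsHermitian.cfc]
  simp only [Unitary.conjStarAlgAut_apply]
  rfl

lemma expGroup_isHermitian {n : ℕ} (H : Matrix (Fin n) (Fin n) ℂ) (s : ℝ) :
    (expGroup H s).IsHermitian :=
  cfc_predicate (fun x : ℝ => Real.exp (s * x)) H

lemma expGroup_mul {n : ℕ} (H : Matrix (Fin n) (Fin n) ℂ) (s r : ℝ) :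
    expGroup H s * expGroup H r = expGroup H (s + r) := by
  unfold expGroup
  rw [← cfc_mul (fun x : ℝ => Real.exp (s * x)) (fun x : ℝ => Real.exp (r * x)) H
    (by fun_prop) (by fun_prop)]
  simp only [← Real.exp_add, add_mul]

lemma expGroup_zero {n : ℕ} {H : Matrix (Fin n) (Fin n) ℂ} (hH : H.IsHermitian) :
    expGroup H 0 = 1 := by
  unfold expGroup
  simpa using cfc_const_one ℝ H hH.isSelfAdjoint

lemma expGroup_inv {n : ℕ} {H : Matrix (Fin n) (Fin n) ℂ} (hH : H.IsHermitian) (s : ℝ) :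
    (expGroup H s)⁻¹ = expGroup H (-s) := by
  apply Matrix.inv_eq_right_inv
  rw [expGroup_mul, add_neg_cancel, expGroup_zero hH]

/-- `exp (s H) = exp (s H / 2) exp (s H / 2)ᴴ` is a congruence of the identity by an invertible
matrix. -/
lemma expGroup_posDef {n : ℕ} {H : Matrix (Fin n) (Fin n) ℂ} (hH : H.IsHermitian) (s : ℝ) :
    (expGroup H s).PosDef := by
  have hu : IsUnit (expGroup H (s / 2)) :=
    IsUnit.of_mul_eq_one (expGroup H (-(s / 2)))
      (by rw [expGroup_mul, add_neg_cancel, expGroup_zero hH])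
  have h := (Matrix.IsUnit.posDef_star_right_conjugate_iff hu).2
    (Matrix.PosDef.one (n := Fin n) (R := ℂ))
  rw [mul_one, star_eq_conjTranspose, (expGroup_isHermitian H (s / 2)).eq, expGroup_mul,
    add_halves] at h
  exact h

/-- Composition rule: `f (exp (s H)) = (x ↦ f (exp (s x))) (H)`. -/
lemma herm_expGroup {n : ℕ} (f : ℝ → ℝ) {H : Matrix (Fin n) (Fin n) ℂ} (hH : H.IsHermitian)
    (s : ℝ) : herm f (expGroup H s) = cfc (fun x : ℝ => f (Real.exp (s * x))) H := by
  rw [herm_eq_cfc f (expGroup_isHermitian H s), expGroup]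
  -- Every function is continuous on the spectrum of a matrix, which is finite.
  exact (cfc_comp' f (fun x : ℝ => Real.exp (s * x)) H
    ((Matrix.finite_real_spectrum.image _).continuousOn f) (by fun_prop) hH.isSelfAdjoint).symm

lemma mlog_expGroup {n : ℕ} {H : Matrix (Fin n) (Fin n) ℂ} (hH : H.IsHermitian) (s : ℝ) :
    mlog (expGroup H s) = s • H := by
  rw [mlog, herm_expGroup _ hH]
  simp only [Real.log_exp]
  exact cfc_const_mul_id s H hH.isSelfAdjoint

lemma mpow_expGroup {n : ℕ} {H : Matrix (Fin n) (Fin n) ℂ} (hH : H.IsHermitian) (s t : ℝ) :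
    mpow (expGroup H s) t = expGroup H (s * t) := by
  rw [mpow, herm_expGroup _ hH, expGroup]
  congr 1
  funext x
  rw [← Real.exp_mul]
  congr 1
  ring

lemma msqrt_expGroup {n : ℕ} {H : Matrix (Fin n) (Fin n) ℂ} (hH : H.IsHermitian) (s : ℝ) :
    msqrt (expGroup H s) = expGroup H (s / 2) := by
  rw [msqrt, herm_expGroup _ hH, expGroup]
  congr 1
  funext x
  rw [← Real.exp_half]
  congr 1
  ring

lemma mlog_isHermitian {n : ℕ} {A : Matrix (Fin n) (Fin n) ℂ} (hA : A.IsHermitian) :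
    (mlog A).IsHermitian := by
  rw [mlog, herm_eq_cfc _ hA]
  exact cfc_predicate Real.log A

/-- A positive definite matrix is recovered from its logarithm: if `log A = s H`, then
`A = exp (s H)`. -/
lemma eq_expGroup {n : ℕ} {A H : Matrix (Fin n) (Fin n) ℂ} (hA : A.PosDef) (hH : H.IsHermitian)
    (s : ℝ) (h : mlog A = s • H) : A = expGroup H s := by
  have h1 : expGroup H s = cfc Real.exp (s • H) := by
    rw [expGroup, ← cfc_comp_const_mul s Real.exp H (by fun_prop) hH.isSelfAdjoint]
  rw [h1, ← h, mlog, herm_eq_cfc _ hA.1]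
  rw [← cfc_comp' Real.exp Real.log A (by fun_prop)
    (Matrix.finite_real_spectrum.continuousOn _) hA.1.isSelfAdjoint]
  conv_lhs => rw [← cfc_id ℝ A hA.1.isSelfAdjoint]
  apply cfc_congr
  intro x hx
  rw [hA.1.spectrum_real_eq_range_eigenvalues] at hx
  obtain ⟨i, rfl⟩ := hx
  exact (Real.exp_log (hA.eigenvalues_pos i)).symm

lemma eq_expGroup_mlog {n : ℕ} {A : Matrix (Fin n) (Fin n) ℂ} (hA : A.PosDef) :
    A = expGroup (mlog A) 1 :=
  eq_expGroup hA (mlog_isHermitian hA.1) 1 (one_smul _ _).symm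

lemma msqrt_posDef {n : ℕ} {A : Matrix (Fin n) (Fin n) ℂ} (hA : A.PosDef) : (msqrt A).PosDef := by
  have hH := mlog_isHermitian hA.1
  rw [eq_expGroup_mlog hA, msqrt_expGroup hH]
  exact expGroup_posDef hH _

lemma msqrt_mul_self {n : ℕ} {A : Matrix (Fin n) (Fin n) ℂ} (hA : A.PosDef) :
    msqrt A * msqrt A = A := by
  have hH := mlog_isHermitian hA.1
  rw [eq_expGroup_mlog hA, msqrt_expGroup hH, expGroup_mul, add_halves]

lemma msqrt_sq {n : ℕ} {S : Matrix (Fin n) (Fin n) ℂ} (hS : S.PosDef) : msqrt (S * S) = S := by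
  have hH := mlog_isHermitian hS.1
  rw [eq_expGroup_mlog hS, expGroup_mul, msqrt_expGroup hH]
  norm_num

lemma posDef_conj {n : ℕ} {P R : Matrix (Fin n) (Fin n) ℂ} (hP : P.PosDef) (hR : R.PosDef) :
    (R * P * R).PosDef := by
  have h := (Matrix.IsUnit.posDef_star_right_conjugate_iff hR.isUnit).2 hP
  rwa [star_eq_conjTranspose, hR.1.eq] at h

lemma geom_posDef {n : ℕ} {A B : Matrix (Fin n) (Fin n) ℂ} (hA : A.PosDef) (hB : B.PosDef) :
    (geom A B).PosDef :=
  posDef_conj (msqrt_posDef (posDef_conj hB (msqrt_posDef hA).inv)) (msqrt_posDef hA)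

/-- `A ♯ B` solves the Riccati equation `G A⁻¹ G = B`. -/
lemma geom_riccati {n : ℕ} {A B : Matrix (Fin n) (Fin n) ℂ} (hA : A.PosDef) (hB : B.PosDef) :
    geom A B * A⁻¹ * geom A B = B := by
  have hR := msqrt_posDef hA
  have hRR := msqrt_mul_self hA
  have hSS := msqrt_mul_self (posDef_conj hB hR.inv)
  unfold geom
  set R := msqrt A
  set S := msqrt (R⁻¹ * B * R⁻¹)
  have hd : IsUnit R.det := (Matrix.isUnit_iff_isUnit_det R).1 hR.isUnit
  have hAi : A⁻¹ = R⁻¹ * R⁻¹ := by rw [← hRR, Matrix.mul_inv_rev]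
  calc R * S * R * A⁻¹ * (R * S * R)
      = R * S * (R * R⁻¹) * (R⁻¹ * R) * S * R := by rw [hAi]; simp only [mul_assoc]
    _ = R * (S * S) * R := by
        rw [Matrix.mul_nonsing_inv _ hd, Matrix.nonsing_inv_mul _ hd]
        simp only [mul_assoc, mul_one, one_mul]
    _ = (R * R⁻¹) * B * (R⁻¹ * R) := by rw [hSS]; simp only [mul_assoc]
    _ = B := by
        rw [Matrix.mul_nonsing_inv _ hd, Matrix.nonsing_inv_mul _ hd, one_mul, mul_one]

/-- A positive definite solution of `G A⁻¹ G = B` is `A ♯ B`: conjugating by `A^{-1/2}` makes it the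
positive definite square root of `A^{-1/2} B A^{-1/2}`. -/
lemma geom_unique {n : ℕ} {A B G : Matrix (Fin n) (Fin n) ℂ} (hA : A.PosDef) (hG : G.PosDef)
    (h : G * A⁻¹ * G = B) : geom A B = G := by
  have hR := msqrt_posDef hA
  have hRR := msqrt_mul_self hA
  unfold geom
  set R := msqrt A
  have hd : IsUnit R.det := (Matrix.isUnit_iff_isUnit_det R).1 hR.isUnit
  have hAi : A⁻¹ = R⁻¹ * R⁻¹ := by rw [← hRR, Matrix.mul_inv_rev]
  have hsq : R⁻¹ * B * R⁻¹ = (R⁻¹ * G * R⁻¹) * (R⁻¹ * G * R⁻¹) := by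
    rw [← h, hAi]; simp only [mul_assoc]
  rw [hsq, msqrt_sq (posDef_conj hG hR.inv)]
  calc R * (R⁻¹ * G * R⁻¹) * R = (R * R⁻¹) * G * (R⁻¹ * R) := by simp only [mul_assoc]
    _ = G := by
        rw [Matrix.mul_nonsing_inv _ hd, Matrix.nonsing_inv_mul _ hd, one_mul, mul_one]

/-- If `X = exp (t H) A exp (t H)`, then `G = exp (-t H)` solves the Riccati equation
`G A⁻¹ G = X⁻¹` of `A ♯ X⁻¹`. -/
lemma inv_conj_expGroup {n : ℕ} (A : Matrix (Fin n) (Fin n) ℂ) {H : Matrix (Fin n) (Fin n) ℂ}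
    (hH : H.IsHermitian) (t : ℝ) :
    (expGroup H t * A * expGroup H t)⁻¹ = expGroup H (-t) * A⁻¹ * expGroup H (-t) := by
  rw [Matrix.mul_inv_rev, Matrix.mul_inv_rev, expGroup_inv hH, mul_assoc]

theorem stmt17 {n : ℕ} (A B : Matrix (Fin n) (Fin n) ℂ)
    (hA : A.PosDef) (hB : B.PosDef) (t : ℝ) (ht : t ∈ Set.Icc (0 : ℝ) 1) :
    Gamma ![1 - t, t] ![A, B] =
      {mpow (geom A⁻¹ B) t * A * mpow (geom A⁻¹ B) t} := by
  have hAA : A⁻¹⁻¹ = A :=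
    Matrix.nonsing_inv_nonsing_inv A ((Matrix.isUnit_iff_isUnit_det A).1 hA.isUnit)
  ext X
  simp only [Gamma, Set.mem_setOf_eq, Fin.sum_univ_two, Matrix.cons_val_zero, Matrix.cons_val_one,
    Set.mem_singleton_iff]
  constructor
  · rintro ⟨hX, hE⟩
    have hU := geom_posDef hA hX.inv
    have hV := geom_posDef hB hX.inv
    have hUX := geom_riccati hA hX.inv
    have hVX := geom_riccati hB hX.inv
    set U := geom A X⁻¹
    set V := geom B X⁻¹
    obtain ⟨H, hHdef⟩ : ∃ H, H = mlog V - mlog U := ⟨_, rfl⟩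
    have hH : H.IsHermitian := by
      rw [hHdef]; exact (mlog_isHermitian hV.1).sub (mlog_isHermitian hU.1)
    have hlU : mlog U = (-t) • H := by
      rw [hHdef, ← sub_eq_zero, ← hE]; module
    have hlV : mlog V = (1 - t) • H := by
      rw [hHdef, ← sub_eq_zero, ← neg_eq_zero, ← neg_zero, ← hE]; module
    have hUE := eq_expGroup hU hH _ hlU
    have hVE := eq_expGroup hV hH _ hlV
    have hXX : X⁻¹⁻¹ = X :=
      Matrix.nonsing_inv_nonsing_inv X ((Matrix.isUnit_iff_isUnit_det X).1 hX.isUnit)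
    have hXA : X = expGroup H t * A * expGroup H t := by
      rw [← hXX, ← hUX, hUE, ← inv_conj_expGroup A hH t, Matrix.nonsing_inv_nonsing_inv]
      exact (Matrix.isUnit_iff_isUnit_det _).1 (posDef_conj hA (expGroup_posDef hH t)).isUnit
    have hXB : X = expGroup H (-(1 - t)) * B * expGroup H (-(1 - t)) := by
      have h := inv_conj_expGroup B hH (-(1 - t))
      rw [neg_neg, ← hVE, hVX] at h
      rw [← hXX, ← h, Matrix.nonsing_inv_nonsing_inv]
      exact (Matrix.isUnit_iff_isUnit_det _).1
        (posDef_conj hB (expGroup_posDef hH (-(1 - t)))).isUnit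
    have hWB : expGroup H 1 * A * expGroup H 1 = B := by
      calc expGroup H 1 * A * expGroup H 1
          = expGroup H (1 - t) * (expGroup H t * A * expGroup H t) * expGroup H (1 - t) := by
            have h1 : expGroup H 1 = expGroup H (1 - t) * expGroup H t := by
              rw [expGroup_mul]; norm_num
            have h2 : expGroup H 1 = expGroup H t * expGroup H (1 - t) := by
              rw [expGroup_mul]; norm_num
            nth_rewrite 1 [h1]
            rw [h2]
            simp only [mul_assoc]
        _ = (expGroup H (1 - t) * expGroup H (-(1 - t))) * B *
              (expGroup H (-(1 - t)) * expGroup H (1 - t)) := by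
            rw [← hXA, hXB]; simp only [mul_assoc]
        _ = B := by
            rw [expGroup_mul, expGroup_mul, add_neg_cancel, neg_add_cancel, expGroup_zero hH,
              one_mul, mul_one]
    have hC : geom A⁻¹ B = expGroup H 1 :=
      geom_unique hA.inv (expGroup_posDef hH 1) (by rw [hAA, hWB])
    rw [hC, mpow_expGroup hH, one_mul]
    exact hXA
  · intro hX
    have hC := geom_posDef hA.inv hB
    have hCB := geom_riccati hA.inv hB
    rw [hAA] at hCB
    set C := geom A⁻¹ B
    obtain ⟨H, hH, hCH⟩ : ∃ H : Matrix (Fin n) (Fin n) ℂ, H.IsHermitian ∧ C = expGroup H 1 :=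
      ⟨mlog C, mlog_isHermitian hC.1, eq_expGroup_mlog hC⟩
    rw [hCH, mpow_expGroup hH, one_mul] at hX
    rw [hCH] at hCB
    have hXi : X⁻¹ = expGroup H (-t) * A⁻¹ * expGroup H (-t) := by
      rw [hX, inv_conj_expGroup A hH]
    have hU : geom A X⁻¹ = expGroup H (-t) :=
      geom_unique hA (expGroup_posDef hH _) hXi.symm
    have hV : geom B X⁻¹ = expGroup H (1 - t) := by
      refine geom_unique hB (expGroup_posDef hH _) ?_
      rw [hXi, ← hCB, inv_conj_expGroup A hH]
      have h1 : expGroup H (-t) = expGroup H (1 - t) * expGroup H (-1) := by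
        rw [expGroup_mul]; ring_nf
      have h2 : expGroup H (-t) = expGroup H (-1) * expGroup H (1 - t) := by
        rw [expGroup_mul]; ring_nf
      nth_rewrite 1 [h1]
      rw [h2]
      simp only [mul_assoc]
    refine ⟨?_, ?_⟩
    · rw [hX]
      exact posDef_conj hA (expGroup_posDef hH t)
    · rw [hU, hV, mlog_expGroup hH, mlog_expGroup hH]
      module
end

section
/- Let g : (0,∞) → ℝ be a continuous, strictly increasing function with g(1) = 0 and g′(1) = 1 that is operator monotone (i.e., for every k and all k×k positive definite matrices A ≤ B in the Löwner order, g(A) ≤ g(B), where g is applied via the functional calculus), and let ω = (w₁,…,w_m) be a weight vector. Then there exists ε > 1 (depending on ω, g, and n) such that for all n×n positive definite complex matrices A₁,…,A_m with ε⁻¹I ≤ Aᵢ ≤ εI for every i, the equation Σᵢ₌₁^m wᵢ g(Aᵢ ♯ X⁻¹) = 0 has exactly one positive definite solution X, and this solution satisfies ε⁻¹I ≤ X ≤ εI. -/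
/-!
Local existence and uniqueness near the identity comes from the implicit function theorem, and an
a priori bound on all solutions turns the local uniqueness into a global one.

*A priori bound* (`solution_le`, `le_solution`). The geometric mean `G = A ♯ X⁻¹` solves the
Riccati equation `G A⁻¹ G = X⁻¹` (`geom_spec`). If `A ≤ c`, then `G² ≤ c X⁻¹`, and operator
monotonicity of the square root (`le_of_sq_le`) gives `G ≤ c^{1/2} X^{-1/2}`. Applying `g` and
averaging, a solution `X` satisfies `0 ≤ g (c^{1/2} X^{-1/2})`, that is, `X ≤ c`. The lower bound
is symmetric. Hence every solution lies in the order interval that contains the `Aᵢ`.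

*Regularity of `g`*. Differentiability at `1` alone is too weak for the implicit function theorem.
An operator monotone function is concave (`concaveOn_of_opmono`), and a concave function that is
differentiable at a point is strictly differentiable there (`hasStrictDerivAt_of_concave`). Since
the functional calculus is Lipschitz for the Frobenius norm with the scalar Lipschitz constant
(`norm_herm_sub_le`), it is strictly differentiable at the identity (`hfun_strict`).

*Local solvability* (`absEq_existsUnique`, `exists_interval`). The equation is extended
from Hermitian matrices to all matrices by taking Hermitian parts inside the functional calculus and by
subtracting half the skew-Hermitian part of `X` from the equation. The derivative in `X` at the
identity is then `-1/2` times the identity map. Zeros of the extended map are Hermitian, so near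
the identity they are exactly the positive definite solutions.
-/

open Matrix
open scoped ComplexOrder

/-! ### The functional calculus and the geometric mean -/

section Spectral

variable {n : ℕ}

/-- `cj U d = U diag(d) U*`; every Hermitian matrix has this form with `U` unitary and `d` real. -/
noncomputable def cj (U : Matrix (Fin n) (Fin n) ℂ) (d : Fin n → ℝ) : Matrix (Fin n) (Fin n) ℂ :=
  U * diagonal (fun i => (d i : ℂ)) * star U

lemma exists_cj {A : Matrix (Fin n) (Fin n) ℂ} (hA : A.IsHermitian) :
    ∃ U : Matrix (Fin n) (Fin n) ℂ, star U * U = 1 ∧ U * star U = 1 ∧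
      A = cj U hA.eigenvalues ∧ ∀ f, herm f A = cj U (fun i => f (hA.eigenvalues i)) := by
  refine ⟨hA.eigenvectorUnitary, ?_, ?_, ?_, ?_⟩
  · exact Unitary.coe_star_mul_self _
  · exact Unitary.coe_mul_star_self _
  · have := hA.spectral_theorem
    rw [Unitary.conjStarAlgAut_apply] at this
    exact this
  · intro f
    simp [herm, hA, cj]

lemma cj_isHermitian (U : Matrix (Fin n) (Fin n) ℂ) (d : Fin n → ℝ) : (cj U d).IsHermitian := by
  unfold cj
  refine Matrix.isHermitian_mul_mul_conjTranspose U ?_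
  rw [Matrix.isHermitian_diagonal_iff]
  intro i
  simp [IsSelfAdjoint]

lemma herm_isHermitian (f : ℝ → ℝ) (A : Matrix (Fin n) (Fin n) ℂ) : (herm f A).IsHermitian := by
  by_cases hA : A.IsHermitian
  · obtain ⟨U, -, -, -, h⟩ := exists_cj hA
    rw [h]; exact cj_isHermitian _ _
  · simp [herm, hA]

/-- The functional calculus does not depend on the chosen diagonalization: the unitary `W = U*V`
relating two of them intertwines the diagonals, so `W i j ≠ 0` forces equal eigenvalues. -/
lemma cj_congr {U V : Matrix (Fin n) (Fin n) ℂ} (hU : star U * U = 1) (hU' : U * star U = 1)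
    (hV : star V * V = 1) (hV' : V * star V = 1) {d e : Fin n → ℝ} (h : cj U d = cj V e)
    (f : ℝ → ℝ) : cj U (fun i => f (d i)) = cj V (fun i => f (e i)) := by
  have key : ∀ a b : Fin n → ℝ, cj U a = cj V b ↔
      diagonal (fun i => (a i : ℂ)) * (star U * V) = (star U * V) * diagonal (fun i => (b i : ℂ)) := by
    intro a b
    unfold cj
    constructor
    · intro h
      calc _ = star U * U * diagonal (fun i => (a i : ℂ)) * (star U * V) := by rw [hU, one_mul]
        _ = star U * (U * diagonal (fun i => (a i : ℂ)) * star U) * V := by noncomm_ring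
        _ = star U * V * diagonal (fun i => (b i : ℂ)) * (star V * V) := by rw [h]; noncomm_ring
        _ = _ := by rw [hV, mul_one]
    · intro h
      calc _ = U * (diagonal (fun i => (a i : ℂ)) * (star U * V)) * star V := by
            rw [← mul_one (U * diagonal (fun i => (a i : ℂ)) * star U), ← hV']; noncomm_ring
        _ = (U * star U) * V * diagonal (fun i => (b i : ℂ)) * star V := by rw [h]; noncomm_ring
        _ = _ := by rw [hU', one_mul]
  rw [key] at h ⊢
  ext i j
  have hij := congrFun (congrFun h i) j
  rw [diagonal_mul, mul_diagonal] at hij ⊢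
  by_cases hw : (star U * V) i j = 0
  · simp [hw]
  · rw [mul_comm] at hij
    have := mul_left_cancel₀ hw hij
    rw [Complex.ofReal_inj] at this
    rw [this, mul_comm]

lemma herm_cj {U : Matrix (Fin n) (Fin n) ℂ} (hU : star U * U = 1) (hU' : U * star U = 1)
    (d : Fin n → ℝ) (f : ℝ → ℝ) : herm f (cj U d) = cj U (fun i => f (d i)) := by
  obtain ⟨V, hV, hV', h, hf⟩ := exists_cj (cj_isHermitian U d)
  rw [hf]
  exact (cj_congr hU hU' hV hV' h f).symm

lemma cj_mul {U : Matrix (Fin n) (Fin n) ℂ} (hU : star U * U = 1) (d e : Fin n → ℝ) :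
    cj U d * cj U e = cj U (fun i => d i * e i) := by
  unfold cj
  calc _ = U * diagonal (fun i => (d i : ℂ)) * (star U * U) * diagonal (fun i => (e i : ℂ)) * star U := by
        noncomm_ring
    _ = U * (diagonal (fun i => (d i : ℂ)) * diagonal (fun i => (e i : ℂ))) * star U := by
        rw [hU]; noncomm_ring
    _ = _ := by rw [diagonal_mul_diagonal]; push_cast; rfl

lemma cj_one {U : Matrix (Fin n) (Fin n) ℂ} (hU' : U * star U = 1) :
    cj U (fun _ => 1) = 1 := by
  unfold cj; simp [hU']

lemma cj_smul (U : Matrix (Fin n) (Fin n) ℂ) (c : ℝ) (d : Fin n → ℝ) :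
    c • cj U d = cj U (fun i => c * d i) := by
  unfold cj
  have : diagonal (fun i => ((c * d i : ℝ) : ℂ)) = c • diagonal (fun i => (d i : ℂ)) := by
    ext i j; by_cases h : i = j <;> simp [h, diagonal]
  rw [this]; simp

lemma cj_sub (U : Matrix (Fin n) (Fin n) ℂ) (d e : Fin n → ℝ) :
    cj U d - cj U e = cj U (fun i => d i - e i) := by
  unfold cj
  have : diagonal (fun i => ((d i - e i : ℝ) : ℂ)) =
      diagonal (fun i => (d i : ℂ)) - diagonal (fun i => (e i : ℂ)) := by
    ext i j; by_cases h : i = j <;> simp [h, diagonal]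
  rw [this]; noncomm_ring

lemma diag_eq {U : Matrix (Fin n) (Fin n) ℂ} (hU : star U * U = 1) (d : Fin n → ℝ) :
    diagonal (fun i => (d i : ℂ)) = star U * cj U d * U := by
  unfold cj
  calc _ = (star U * U) * diagonal (fun i => (d i : ℂ)) * (star U * U) := by simp [hU]
    _ = _ := by noncomm_ring

lemma cj_posSemidef {U : Matrix (Fin n) (Fin n) ℂ} (hU : star U * U = 1) {d : Fin n → ℝ} :
    (cj U d).PosSemidef ↔ ∀ i, 0 ≤ d i := by
  constructor
  · intro h i
    have := h.conjTranspose_mul_mul_same U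
    rw [← star_eq_conjTranspose, ← diag_eq hU, posSemidef_diagonal_iff] at this
    exact_mod_cast this i
  · intro h
    exact (posSemidef_diagonal_iff.2 fun i => by exact_mod_cast h i).mul_mul_conjTranspose_same U

lemma cj_posDef {U : Matrix (Fin n) (Fin n) ℂ} (hU : star U * U = 1) (hU' : U * star U = 1)
    {d : Fin n → ℝ} (h : ∀ i, 0 < d i) : (cj U d).PosDef := by
  have h1 := (cj_posSemidef hU).2 fun i => (h i).le
  refine (h1.posDef_iff_isUnit).2 ?_
  refine IsUnit.of_mul_eq_one (cj U (fun i => (d i)⁻¹)) ?_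
  rw [cj_mul hU, ← cj_one hU']
  congr 1; ext i; exact mul_inv_cancel₀ (h i).ne'

lemma cj_inv {U : Matrix (Fin n) (Fin n) ℂ} (hU : star U * U = 1) (hU' : U * star U = 1)
    {d : Fin n → ℝ} (h : ∀ i, 0 < d i) : (cj U d)⁻¹ = cj U (fun i => (d i)⁻¹) := by
  refine Matrix.inv_eq_right_inv ?_
  rw [cj_mul hU, ← cj_one hU']
  congr 1; ext i; exact mul_inv_cancel₀ (h i).ne'

lemma msqrt_spec {A : Matrix (Fin n) (Fin n) ℂ} (hA : A.PosDef) :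
    (msqrt A).PosDef ∧ msqrt A * msqrt A = A := by
  obtain ⟨U, hU, hU', h, hf⟩ := exists_cj hA.isHermitian
  have hp := hA.eigenvalues_pos
  constructor
  · rw [msqrt, hf]
    exact cj_posDef hU hU' fun i => Real.sqrt_pos.2 (hp i)
  · rw [msqrt, hf, cj_mul hU]
    conv_rhs => rw [h]
    congr 1; ext i; exact Real.mul_self_sqrt (hp i).le

lemma posDef_conj_s19 {A B : Matrix (Fin n) (Fin n) ℂ} (hA : A.PosDef) (hB : B.PosDef) :
    (A * B * A).PosDef := by
  have := hB.mul_mul_conjTranspose_same (B := A) (Matrix.vecMul_injective_iff_isUnit.2 hA.isUnit)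
  rwa [hA.isHermitian.eq] at this

/-- `A ♯ B` is positive definite and solves the Riccati equation `G A⁻¹ G = B`. -/
lemma geom_spec {A B : Matrix (Fin n) (Fin n) ℂ} (hA : A.PosDef) (hB : B.PosDef) :
    (geom A B).PosDef ∧ geom A B * A⁻¹ * geom A B = B := by
  obtain ⟨hR, hRR⟩ := msqrt_spec hA
  have hRi := hR.inv
  obtain ⟨hM, hMM⟩ := msqrt_spec (posDef_conj_s19 hRi hB)
  refine ⟨posDef_conj_s19 hR hM, ?_⟩
  unfold geom
  set R := msqrt A
  set M := msqrt (R⁻¹ * B * R⁻¹)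
  have hdet : IsUnit R.det := (Matrix.isUnit_iff_isUnit_det _).1 hR.isUnit
  have h1 : R * R⁻¹ = 1 := Matrix.mul_nonsing_inv _ hdet
  have h2 : R⁻¹ * R = 1 := Matrix.nonsing_inv_mul _ hdet
  have hAi : A⁻¹ = R⁻¹ * R⁻¹ := by rw [← hRR, Matrix.mul_inv_rev]
  rw [hAi]
  calc R * M * R * (R⁻¹ * R⁻¹) * (R * M * R) = R * M * (R * R⁻¹) * (R⁻¹ * R) * M * R := by
        noncomm_ring
    _ = R * (M * M) * R := by rw [h1, h2]; noncomm_ring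
    _ = (R * R⁻¹) * B * (R⁻¹ * R) := by rw [hMM]; noncomm_ring
    _ = B := by rw [h1, h2]; noncomm_ring

/-- Operator monotonicity of the square root: a negative eigenvalue `t` of `S - G` with eigenvector
`v` would give `‖G v‖² = ‖S v - t v‖² > ‖S v‖²`. -/
lemma le_of_sq_le {G S : Matrix (Fin n) (Fin n) ℂ} (hG : G.IsHermitian) (hS : S.PosDef)
    (h : (S * S - G * G).PosSemidef) : (S - G).PosSemidef := by
  have hT : (S - G).IsHermitian := hS.isHermitian.sub hG
  rw [hT.posSemidef_iff_eigenvalues_nonneg]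
  intro i
  by_contra hneg
  simp only [Pi.zero_apply, not_le] at hneg
  set t := hT.eigenvalues i
  set v : Fin n → ℂ := ⇑(hT.eigenvectorBasis i)
  have hv : v ≠ 0 := by
    intro h0
    have := (hT.eigenvectorBasis.orthonormal.ne_zero i)
    apply this
    ext j
    exact congrFun h0 j
  have hev : (S - G) *ᵥ v = t • v := hT.mulVec_eigenvectorBasis i
  have hGv : G *ᵥ v = S *ᵥ v - (t : ℂ) • v := by
    rw [Matrix.sub_mulVec] at hev
    have : (t : ℂ) • v = t • v := by ext j; simp
    rw [this, ← hev]; abel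
  have hsq : ∀ H : Matrix (Fin n) (Fin n) ℂ, H.IsHermitian →
      star v ⬝ᵥ ((H * H) *ᵥ v) = star (H *ᵥ v) ⬝ᵥ (H *ᵥ v) := by
    intro H hH
    rw [Matrix.star_mulVec, hH.eq, ← Matrix.dotProduct_mulVec, Matrix.mulVec_mulVec]
  have h0 := h.dotProduct_mulVec_nonneg v
  rw [Matrix.sub_mulVec, dotProduct_sub, hsq _ hS.isHermitian, hsq _ hG, hGv] at h0
  have hp := hS.dotProduct_mulVec_pos hv
  have hsv : star (S *ᵥ v) ⬝ᵥ v = star v ⬝ᵥ (S *ᵥ v) := by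
    rw [Matrix.star_mulVec, hS.isHermitian.eq, ← Matrix.dotProduct_mulVec]
  have hvv : 0 < star v ⬝ᵥ v := Matrix.dotProduct_star_self_pos_iff.2 hv
  simp only [star_sub, star_smul, sub_dotProduct, dotProduct_sub, smul_dotProduct,
    dotProduct_smul, hsv, smul_eq_mul, Complex.star_def, Complex.conj_ofReal] at h0
  rw [Complex.lt_def] at hp hvv
  rw [Complex.le_def] at h0
  obtain ⟨h0, -⟩ := h0
  simp only [Complex.sub_re, Complex.mul_re, Complex.ofReal_re, Complex.ofReal_im, zero_mul,
    Complex.zero_re, sub_zero, Complex.sub_im, Complex.mul_im] at h0 hp hvv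
  nlinarith [mul_pos (neg_pos.2 hneg) hp.1, mul_pos (mul_pos_of_neg_of_neg hneg hneg) hvv.1]

end Spectral

/-! ### A priori bounds on solutions -/

section Bounds

variable {n : ℕ}

lemma one_eq_smul_cj {U : Matrix (Fin n) (Fin n) ℂ} (hU' : U * star U = 1) (c : ℝ) :
    c • (1 : Matrix (Fin n) (Fin n) ℂ) = cj U (fun _ => c) := by
  rw [← cj_one hU', cj_smul]; simp

lemma smul_inv_sub_one_posSemidef {A : Matrix (Fin n) (Fin n) ℂ} (hA : A.PosDef) {c : ℝ}
    (h : (c • (1 : Matrix (Fin n) (Fin n) ℂ) - A).PosSemidef) : (c • A⁻¹ - 1).PosSemidef := by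
  obtain ⟨U, hU, hU', e, -⟩ := exists_cj hA.isHermitian
  have hp := hA.eigenvalues_pos
  set d := hA.isHermitian.eigenvalues
  rw [e, one_eq_smul_cj hU', cj_sub, cj_posSemidef hU] at h
  rw [e, cj_inv hU hU' hp, cj_smul, ← cj_one hU', cj_sub, cj_posSemidef hU]
  intro i
  rw [sub_nonneg, ← div_eq_mul_inv, le_div_iff₀ (hp i)]
  linarith [h i]

lemma one_sub_smul_inv_posSemidef {A : Matrix (Fin n) (Fin n) ℂ} (hA : A.PosDef) {c : ℝ}
    (h : (A - c • (1 : Matrix (Fin n) (Fin n) ℂ)).PosSemidef) : (1 - c • A⁻¹).PosSemidef := by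
  obtain ⟨U, hU, hU', e, -⟩ := exists_cj hA.isHermitian
  have hp := hA.eigenvalues_pos
  set d := hA.isHermitian.eigenvalues
  rw [e, one_eq_smul_cj hU', cj_sub, cj_posSemidef hU] at h
  rw [e, cj_inv hU hU' hp, cj_smul, ← cj_one hU', cj_sub, cj_posSemidef hU]
  intro i
  rw [sub_nonneg, ← div_eq_mul_inv, div_le_iff₀ (hp i)]
  linarith [h i]

lemma posSemidef_weighted_sum {m : ℕ} {w : Fin m → ℝ} (hw : ∀ i, 0 < w i)
    {M : Fin m → Matrix (Fin n) (Fin n) ℂ} (hM : ∀ i, (M i).PosSemidef) :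
    (∑ i, w i • M i).PosSemidef :=
  Matrix.posSemidef_sum _ fun i _ => (hM i).smul (hw i).le

/-- If all `Aᵢ ≤ c` then every solution `X` satisfies `X ≤ c`: the Riccati equation gives
`(Aᵢ ♯ X⁻¹)² ≤ c X⁻¹`, hence `Aᵢ ♯ X⁻¹ ≤ c^{1/2} X^{-1/2}`, hence `0 ≤ g (c^{1/2} X^{-1/2})`. -/
lemma solution_le {g : ℝ → ℝ} (hg_mono : StrictMonoOn g (Set.Ioi 0)) (hg_one : g 1 = 0)
    (hg_opmono : ∀ (A B : Matrix (Fin n) (Fin n) ℂ),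
      A.PosDef → B.PosDef → (B - A).PosSemidef → (herm g B - herm g A).PosSemidef)
    {m : ℕ} {w : Fin m → ℝ} (hw : ∀ i, 0 < w i) (hw1 : ∑ i, w i = 1)
    {A : Fin m → Matrix (Fin n) (Fin n) ℂ} (hA : ∀ i, (A i).PosDef) {c : ℝ} (hc : 0 < c)
    (hAc : ∀ i, (c • (1 : Matrix (Fin n) (Fin n) ℂ) - A i).PosSemidef)
    {X : Matrix (Fin n) (Fin n) ℂ} (hX : X.PosDef)
    (h : ∑ i, w i • herm g (geom (A i) X⁻¹) = 0) :
    (c • (1 : Matrix (Fin n) (Fin n) ℂ) - X).PosSemidef := by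
  obtain ⟨U, hU, hU', e, -⟩ := exists_cj hX.isHermitian
  have hp := hX.eigenvalues_pos
  set d := hX.isHermitian.eigenvalues
  have hq : ∀ i, 0 < √(c / d i) := fun i => Real.sqrt_pos.2 (div_pos hc (hp i))
  set S := cj U (fun i => √(c / d i)) with hSdef
  have hS : S.PosDef := cj_posDef hU hU' hq
  have hSS : S * S = c • X⁻¹ := by
    rw [hSdef, cj_mul hU, e, cj_inv hU hU' hp, cj_smul]
    congr 1; ext i
    rw [Real.mul_self_sqrt (div_pos hc (hp i)).le, div_eq_mul_inv]
  have hle : ∀ i, (herm g S - herm g (geom (A i) X⁻¹)).PosSemidef := by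
    intro i
    obtain ⟨hG, hGr⟩ := geom_spec (hA i) hX.inv
    refine hg_opmono _ _ hG hS (le_of_sq_le hG.isHermitian hS ?_)
    have h1 := (smul_inv_sub_one_posSemidef (hA i) (hAc i)).mul_mul_conjTranspose_same
      (geom (A i) X⁻¹)
    rw [hG.isHermitian.eq] at h1
    convert h1 using 1
    rw [hSS]
    rw [mul_sub, sub_mul, Matrix.mul_smul, Matrix.smul_mul, mul_one, hGr]
  have hsum := posSemidef_weighted_sum hw hle
  simp only [smul_sub, Finset.sum_sub_distrib, h, sub_zero, ← Finset.sum_smul, hw1,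
    one_smul] at hsum
  rw [hSdef, herm_cj hU hU', cj_posSemidef hU] at hsum
  rw [e, one_eq_smul_cj hU', cj_sub, cj_posSemidef hU]
  intro i
  have := hsum i
  rw [← hg_one, hg_mono.le_iff_le (Set.mem_Ioi.2 one_pos) (Set.mem_Ioi.2 (hq i)), Real.one_le_sqrt,
    le_div_iff₀ (hp i)] at this
  linarith

/-- If all `Aᵢ ≥ c` then every solution `X` satisfies `X ≥ c`; the argument of `solution_le` with
all inequalities reversed. -/
lemma le_solution {g : ℝ → ℝ} (hg_mono : StrictMonoOn g (Set.Ioi 0)) (hg_one : g 1 = 0)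
    (hg_opmono : ∀ (A B : Matrix (Fin n) (Fin n) ℂ),
      A.PosDef → B.PosDef → (B - A).PosSemidef → (herm g B - herm g A).PosSemidef)
    {m : ℕ} {w : Fin m → ℝ} (hw : ∀ i, 0 < w i) (hw1 : ∑ i, w i = 1)
    {A : Fin m → Matrix (Fin n) (Fin n) ℂ} (hA : ∀ i, (A i).PosDef) {c : ℝ} (hc : 0 < c)
    (hAc : ∀ i, (A i - c • (1 : Matrix (Fin n) (Fin n) ℂ)).PosSemidef)
    {X : Matrix (Fin n) (Fin n) ℂ} (hX : X.PosDef)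
    (h : ∑ i, w i • herm g (geom (A i) X⁻¹) = 0) :
    (X - c • (1 : Matrix (Fin n) (Fin n) ℂ)).PosSemidef := by
  obtain ⟨U, hU, hU', e, -⟩ := exists_cj hX.isHermitian
  have hp := hX.eigenvalues_pos
  set d := hX.isHermitian.eigenvalues
  have hq : ∀ i, 0 < √(c / d i) := fun i => Real.sqrt_pos.2 (div_pos hc (hp i))
  set S := cj U (fun i => √(c / d i)) with hSdef
  have hS : S.PosDef := cj_posDef hU hU' hq
  have hSS : S * S = c • X⁻¹ := by
    rw [hSdef, cj_mul hU, e, cj_inv hU hU' hp, cj_smul]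
    congr 1; ext i
    rw [Real.mul_self_sqrt (div_pos hc (hp i)).le, div_eq_mul_inv]
  have hle : ∀ i, (herm g (geom (A i) X⁻¹) - herm g S).PosSemidef := by
    intro i
    obtain ⟨hG, hGr⟩ := geom_spec (hA i) hX.inv
    refine hg_opmono _ _ hS hG (le_of_sq_le hS.isHermitian hG ?_)
    have h1 := (one_sub_smul_inv_posSemidef (hA i) (hAc i)).mul_mul_conjTranspose_same
      (geom (A i) X⁻¹)
    rw [hG.isHermitian.eq] at h1
    convert h1 using 1
    rw [hSS]
    rw [mul_sub, sub_mul, Matrix.mul_smul, Matrix.smul_mul, mul_one, hGr]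
  have hsum := posSemidef_weighted_sum hw hle
  simp only [smul_sub, Finset.sum_sub_distrib, h, zero_sub, ← Finset.sum_smul, hw1,
    one_smul] at hsum
  rw [hSdef, herm_cj hU hU', ← neg_one_smul ℝ, cj_smul, cj_posSemidef hU] at hsum
  rw [e, one_eq_smul_cj hU', cj_sub, cj_posSemidef hU]
  intro i
  have := hsum i
  rw [neg_one_mul, neg_nonneg, ← hg_one, hg_mono.le_iff_le (Set.mem_Ioi.2 (hq i))
    (Set.mem_Ioi.2 one_pos), Real.sqrt_le_iff, one_pow,
    div_le_one (hp i)] at this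
  linarith [this.2]

end Bounds

/-! ### Concavity and strict differentiability of the scalar function -/

section Scalar

open Filter Topology

/-- An operator monotone function on `(0,∞)` is concave. The `2 × 2` matrix
`T = U diag(a,b) U*` with `U` a rotation has `(0,0)` entry `s a + t b`, and
`T ≤ diag(s a + t b + η², M)` for `M` large; compare the `(0,0)` entries after applying `g`. -/
lemma concaveOn_of_opmono {g : ℝ → ℝ} (hg_cont : ContinuousOn g (Set.Ioi 0))
    (hg_opmono : ∀ (A B : Matrix (Fin 2) (Fin 2) ℂ),
      A.PosDef → B.PosDef → (B - A).PosSemidef → (herm g B - herm g A).PosSemidef) :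
    ConcaveOn ℝ (Set.Ioi 0) g := by
  refine ⟨convex_Ioi 0, ?_⟩
  intro a ha b hb s t hs ht hst
  simp only [smul_eq_mul]
  rw [Set.mem_Ioi] at ha hb
  have hc : 0 < s * a + t * b := (convex_Ioi (0 : ℝ)) ha hb hs ht hst
  have hc' : 0 < t * a + s * b := (convex_Ioi (0 : ℝ)) ha hb ht hs (by linarith)
  have key : ∀ η : ℝ, 0 < η → s * g a + t * g b ≤ g (s * a + t * b + η ^ 2) := by
    intro η hη
    have hs2 : ((√s : ℝ) : ℂ) * (√s : ℝ) = (s : ℂ) := by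
      rw [← Complex.ofReal_mul, Real.mul_self_sqrt hs]
    have ht2 : ((√t : ℝ) : ℂ) * (√t : ℝ) = (t : ℂ) := by
      rw [← Complex.ofReal_mul, Real.mul_self_sqrt ht]
    have hst' : (s : ℂ) + t = 1 := by rw [← Complex.ofReal_add, hst]; simp
    set U : Matrix (Fin 2) (Fin 2) ℂ := !![((√s : ℝ) : ℂ), (√t : ℝ); -(√t : ℝ), (√s : ℝ)] with hUd
    have hstar : star U = !![((√s : ℝ) : ℂ), -(√t : ℝ); (√t : ℝ), (√s : ℝ)] := by
      ext i j; fin_cases i <;> fin_cases j <;> simp [hUd, star_apply]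
    have hU' : U * star U = 1 := by
      rw [hstar, hUd]
      ext i j; fin_cases i <;> fin_cases j <;> simp [Matrix.mul_apply, Fin.sum_univ_two] <;>
        first | ring1 | linear_combination hs2 + ht2 + hst'
    have hU : star U * U = 1 := mul_eq_one_comm.1 hU'
    have hcj : ∀ x y : ℝ, cj U ![x, y] = !![((s * x + t * y : ℝ) : ℂ), ((√s * √t * (y - x) : ℝ) : ℂ);
        ((√s * √t * (y - x) : ℝ) : ℂ), ((t * x + s * y : ℝ) : ℂ)] := by
      intro x y
      unfold cj
      rw [hstar, hUd]
      ext i j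
      rw [Matrix.mul_apply, Fin.sum_univ_two, mul_diagonal, mul_diagonal]
      fin_cases i <;> fin_cases j <;> simp
      · linear_combination x * hs2 + y * ht2
      · ring
      · ring
      · linear_combination y * hs2 + x * ht2
    set q := √s * √t * (a - b) with hq
    set M := t * a + s * b + (q / η) ^ 2 with hM
    have hMpos : 0 < M := by positivity
    have h1 : star (1 : Matrix (Fin 2) (Fin 2) ℂ) * 1 = 1 := by simp
    have h1' : (1 : Matrix (Fin 2) (Fin 2) ℂ) * star 1 = 1 := by simp
    have hT : (cj U ![a, b]).PosDef := cj_posDef hU hU' (by intro i; fin_cases i <;> simpa)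
    have hB : (cj 1 ![s * a + t * b + η ^ 2, M]).PosDef :=
      cj_posDef h1 h1' (by intro i; fin_cases i <;> simp <;> positivity)
    have hle : (cj 1 ![s * a + t * b + η ^ 2, M] - cj U ![a, b]).PosSemidef := by
      have hv := posSemidef_vecMulVec_self_star ![(η : ℂ), ((q / η : ℝ) : ℂ)]
      convert hv using 1
      rw [hcj]
      have hηc : (η : ℂ) ≠ 0 := by exact_mod_cast hη.ne'
      ext i j; fin_cases i <;> fin_cases j <;> simp [cj, vecMulVec, hq, hM] <;> field_simp <;> ring
    have := hg_opmono _ _ hT hB hle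
    rw [herm_cj h1 h1', herm_cj hU hU'] at this
    have h00 := this.diag_nonneg (i := 0)
    have e1 : (fun i => g (![a, b] i)) = ![g a, g b] := by ext i; fin_cases i <;> simp
    rw [e1, Matrix.sub_apply, hcj] at h00
    simp only [cj, one_mul, star_one, mul_one, diagonal_apply_eq, Matrix.of_apply, cons_val_zero,
      ← Complex.ofReal_sub, Complex.zero_le_real] at h00
    linarith
  have hlim : Tendsto (fun η : ℝ => g (s * a + t * b + η ^ 2)) (𝓝[>] 0) (𝓝 (g (s * a + t * b))) := by
    have h1 : ContinuousAt g (s * a + t * b) := hg_cont.continuousAt (Ioi_mem_nhds hc)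
    have h2 : Tendsto (fun η : ℝ => s * a + t * b + η ^ 2) (𝓝 0) (𝓝 (s * a + t * b)) := by
      have : Continuous (fun η : ℝ => s * a + t * b + η ^ 2) := by fun_prop
      simpa using this.tendsto 0
    exact h1.tendsto.comp (h2.mono_left nhdsWithin_le_nhds)
  refine ge_of_tendsto hlim ?_
  filter_upwards [self_mem_nhdsWithin] with η hη using key η hη

/-- A concave function that is differentiable at `1` is strictly differentiable there: chords near
`1` have slopes squeezed between those of chords to `1 - r` and to `1 + r`. -/
lemma hasStrictDerivAt_of_concave {g : ℝ → ℝ} (hc : ConcaveOn ℝ (Set.Ioi 0) g)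
    (hd : HasDerivAt g 1 1) : HasStrictDerivAt g 1 1 := by
  have hca : ContinuousAt g 1 := hd.continuousAt
  refine .of_isLittleO (Asymptotics.isLittleO_iff.2 ?_)
  intro δ hδ
  have hsl := hasDerivAt_iff_tendsto_slope.1 hd
  have hball : ∀ᶠ x in 𝓝[≠] (1 : ℝ), |slope g 1 x - 1| < δ := by
    have := (Metric.tendsto_nhds.1 hsl) δ hδ
    simpa [Real.dist_eq] using this
  obtain ⟨r, hr, hrb⟩ := Metric.mem_nhdsWithin_iff.1 hball
  set ρ := min (r / 2) (1 / 2) with hρ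
  have hρ0 : 0 < ρ := by positivity
  have hρr : ρ < r := lt_of_le_of_lt (min_le_left _ _) (by linarith)
  have hρ1 : ρ < 1 := lt_of_le_of_lt (min_le_right _ _) (by norm_num)
  have hup : slope g 1 (1 - ρ) < 1 + δ := by
    have : |slope g 1 (1 - ρ) - 1| < δ := hrb ⟨by
      simp [abs_of_pos hρ0, hρr], by simp [hρ0.ne']⟩
    linarith [(abs_lt.1 this).2]
  have hlo : 1 - δ < slope g 1 (1 + ρ) := by
    have : |slope g 1 (1 + ρ) - 1| < δ := hrb ⟨by
      simp [abs_of_pos hρ0, hρr], by simp [hρ0.ne']⟩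
    linarith [(abs_lt.1 this).1]
  have ev1 : ∀ᶠ x in 𝓝 (1 : ℝ), slope g x (1 - ρ) < 1 + δ := by
    have : ContinuousAt (fun x => slope g x (1 - ρ)) 1 := by
      simp only [slope_def_field]
      refine ContinuousAt.div (by fun_prop) (by fun_prop) (by simp [hρ0.ne'])
    exact this.eventually_lt continuousAt_const hup
  have ev2 : ∀ᶠ x in 𝓝 (1 : ℝ), 1 - δ < slope g x (1 + ρ) := by
    have : ContinuousAt (fun x => slope g x (1 + ρ)) 1 := by
      simp only [slope_def_field]
      refine ContinuousAt.div (by fun_prop) (by fun_prop) (by simp [hρ0.ne'])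
    exact continuousAt_const.eventually_lt this hlo
  have ev3 : ∀ᶠ x in 𝓝 (1 : ℝ), 1 - ρ < x ∧ x < 1 + ρ :=
    Ioo_mem_nhds (by linarith) (by linarith)
  have ev := ev1.and (ev2.and ev3)
  have chord : ∀ x y, x < y → (slope g x (1 - ρ) < 1 + δ) → (1 - δ < slope g y (1 + ρ)) →
      1 - ρ < x → y < 1 + ρ → |g x - g y - (x - y)| ≤ δ * |x - y| := by
    intro x y hxy h1 h2 h3 h4
    have m1 : (1 - ρ) ∈ Set.Ioi (0 : ℝ) := by simp; linarith
    have m2 : (1 + ρ) ∈ Set.Ioi (0 : ℝ) := by simp; linarith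
    have mx : x ∈ Set.Ioi (0 : ℝ) := by simp at m1 ⊢; linarith
    have my : y ∈ Set.Ioi (0 : ℝ) := by simp at m1 ⊢; linarith
    have s1 := hc.slope_anti_adjacent m1 my h3 hxy
    have s2 := hc.slope_anti_adjacent mx m2 hxy h4
    rw [slope_comm, slope_def_field] at h1
    rw [slope_def_field] at h2
    have u1 := s1.trans h1.le
    have u2 := h2.le.trans s2
    rw [div_le_iff₀ (by linarith)] at u1
    rw [le_div_iff₀ (by linarith)] at u2
    rw [abs_of_neg (show x - y < 0 by linarith), abs_le]
    constructor <;> linarith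
  have ev' := ev.prod_nhds ev
  filter_upwards [ev'] with p hp
  obtain ⟨⟨a1, a2, a3, a4⟩, b1, b2, b3, b4⟩ := hp
  simp only [ContinuousLinearMap.toSpanSingleton_apply, smul_eq_mul, mul_one, Real.norm_eq_abs]
  rcases lt_trichotomy p.1 p.2 with h | h | h
  · exact chord _ _ h a1 b2 a3 b4
  · simp [h]
  · have := chord _ _ h b1 a2 b3 a4
    rw [abs_sub_comm p.1 p.2, ← abs_neg]
    convert this using 2
    ring

end Scalar

/-! ### The implicit function theorem for the extended equation -/

section Implicit

open Filter Topology

/-- The geometric mean expression over a ring, with `q` in the role of the square root. -/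
noncomputable def absGeom {E : Type*} [Ring E] (q : E → E) (A B : E) : E :=
  q A * q (Ring.inverse (q A) * B * Ring.inverse (q A)) * q A

/-- The left-hand side of the equation as a function of `(A, X)`, with `q` and `γ` in the roles of
square root and `g`. The term `-(X - R X)/2` vanishes on the range of `R` and makes the partial
derivative in `X` invertible on the whole space. -/
noncomputable def absEq {E : Type*} [Ring E] [Algebra ℝ E] {m : ℕ} (w : Fin m → ℝ) (R q γ : E → E)
    (A : Fin m → E) (X : E) : E :=
  ∑ i, w i • γ (absGeom q (A i) (Ring.inverse X)) - (1 / 2 : ℝ) • (X - R X)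

lemma absGeom_one {E : Type*} [Ring E] {q : E → E} (hq1 : q 1 = 1) : absGeom q 1 1 = 1 := by
  simp [absGeom, hq1]

variable {E : Type*} [NormedRing E] [NormedAlgebra ℝ E]

lemma hasStrictFDerivAt_mul_of_one {P : Type*} [NormedAddCommGroup P] [NormedSpace ℝ P]
    {f g : P → E} {f' g' : P →L[ℝ] E} {p : P} (hf : HasStrictFDerivAt f f' p)
    (hg : HasStrictFDerivAt g g' p) (hf1 : f p = 1) (hg1 : g p = 1) :
    HasStrictFDerivAt (fun x => f x * g x) (f' + g') p := by
  have := hf.mul' hg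
  rw [hf1, hg1] at this
  have e : f' + g' = (1 : E) • g' + MulOpposite.op (1 : E) • f' := by
    rw [MulOpposite.op_one, one_smul, one_smul, add_comm]
  rw [e]
  exact this

variable [CompleteSpace E]

lemma hasStrictFDerivAt_inverse_one :
    HasStrictFDerivAt (Ring.inverse : E → E) (-(.id ℝ E) : E →L[ℝ] E) 1 := by
  have := hasStrictFDerivAt_ringInverse (𝕜 := ℝ) (1 : Eˣ)
  have e : (-(.id ℝ E) : E →L[ℝ] E) =
      -((ContinuousLinearMap.mulLeftRight ℝ E) ↑(1 : Eˣ)⁻¹) ↑(1 : Eˣ)⁻¹ := by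
    ext x
    simp
  rw [e]
  exact this

/-- At the identity the geometric mean has derivative `(x, y) ↦ R (x + y) / 2`, when the square
root has derivative `R / 2` for an idempotent `R`. -/
lemma absGeom_hasStrictFDerivAt {P : Type*} [NormedAddCommGroup P] [NormedSpace ℝ P]
    {R : E →L[ℝ] E} (hR : ∀ x, R (R x) = R x) {q : E → E} (hq1 : q 1 = 1)
    (hq : HasStrictFDerivAt q ((1 / 2 : ℝ) • R) 1)
    {a b : P → E} {a' b' : P →L[ℝ] E} {p : P} (ha : HasStrictFDerivAt a a' p)
    (hb : HasStrictFDerivAt b b' p) (ha1 : a p = 1) (hb1 : b p = 1) :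
    HasStrictFDerivAt (fun x => absGeom q (a x) (b x)) ((1 / 2 : ℝ) • R.comp (a' + b')) p := by
  have hqa : HasStrictFDerivAt (fun x => q (a x)) (((1 / 2 : ℝ) • R).comp a') p :=
    HasStrictFDerivAt.comp p (by rwa [ha1]) ha
  have hqa1 : q (a p) = 1 := by rw [ha1, hq1]
  have hi := HasStrictFDerivAt.comp (g := (Ring.inverse : E → E)) p
    (by rw [hqa1]; exact hasStrictFDerivAt_inverse_one) hqa
  have hi1 : Ring.inverse (q (a p)) = 1 := by simp [hqa1]
  have hin := hasStrictFDerivAt_mul_of_one (hasStrictFDerivAt_mul_of_one hi hb hi1 hb1) hi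
    (by rw [hi1, hb1, mul_one]) hi1
  have hin1 : Ring.inverse (q (a p)) * b p * Ring.inverse (q (a p)) = 1 := by
    rw [hi1, hb1, mul_one, mul_one]
  have hqin := HasStrictFDerivAt.comp (g := q) (g' := (1 / 2 : ℝ) • R) p
    (by rw [hin1]; exact hq) hin
  have hqin1 : q (Ring.inverse (q (a p)) * b p * Ring.inverse (q (a p))) = 1 := by
    rw [hin1, hq1]
  have hfin := hasStrictFDerivAt_mul_of_one (hasStrictFDerivAt_mul_of_one hqa hqin hqa1 hqin1) hqa
    (by rw [hqin1, hqa1, mul_one]) hqa1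
  refine HasStrictFDerivAt.congr_fderiv hfin ?_
  ext x
  simp [hR]
  module

/-- For `Aᵢ` near `1` the equation `absEq = 0` has exactly one solution near `1`, by the implicit
function theorem. The strict differentiability of `q` and `γ` at `1`, with derivatives `R / 2` and
`R`, is spelled out in `ε`-`δ` form. -/
lemma absEq_existsUnique {m : ℕ} {w : Fin m → ℝ} (hw1 : ∑ i, w i = 1) {R q γ : E → E}
    (hRadd : ∀ x y, R (x + y) = R x + R y) (hRsmul : ∀ (c : ℝ) x, R (c • x) = c • R x)
    (hRn : ∀ x, ‖R x‖ ≤ ‖x‖) (hRR : ∀ x, R (R x) = R x) (hR1 : R 1 = 1)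
    (hq1 : q 1 = 1) (hγ1 : γ 1 = 0)
    (hq : ∀ δ > 0, ∃ r > 0, ∀ A B, ‖A - 1‖ < r → ‖B - 1‖ < r →
      ‖q A - q B - (1 / 2 : ℝ) • R (A - B)‖ ≤ δ * ‖A - B‖)
    (hγ : ∀ δ > 0, ∃ r > 0, ∀ A B, ‖A - 1‖ < r → ‖B - 1‖ < r →
      ‖γ A - γ B - (1 : ℝ) • R (A - B)‖ ≤ δ * ‖A - B‖) :
    ∃ r, 0 < r ∧ r ≤ 1 ∧ ∃ s > 0, ∀ A : Fin m → E, (∀ i, ‖A i - 1‖ < s) →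
      ∃! X, ‖X - 1‖ < r ∧ absEq w R q γ A X = 0 := by
  let Rc : E →L[ℝ] E := LinearMap.mkContinuous
    { toFun := R, map_add' := hRadd, map_smul' := hRsmul } 1 (by simpa using hRn)
  have hRc : ∀ x, Rc x = R x := fun _ => rfl
  have strict : ∀ (f : E → E) (c : ℝ), (∀ δ > 0, ∃ r > 0, ∀ A B, ‖A - 1‖ < r → ‖B - 1‖ < r →
      ‖f A - f B - c • R (A - B)‖ ≤ δ * ‖A - B‖) → HasStrictFDerivAt f (c • Rc) 1 := by
    intro f c hf
    refine .of_isLittleO (Asymptotics.isLittleO_iff.2 ?_)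
    intro δ hδ
    obtain ⟨r, hr, h⟩ := hf δ hδ
    rw [Metric.eventually_nhds_iff]
    refine ⟨r, hr, ?_⟩
    rintro ⟨A, B⟩ hAB
    rw [Prod.dist_eq, max_lt_iff, dist_eq_norm, dist_eq_norm] at hAB
    exact h A B hAB.1 hAB.2
  have dq := strict q _ hq
  have dγ := strict γ _ hγ
  rw [one_smul] at dγ
  let u : (Fin m → E) × E := (fun _ => 1, 1)
  have dX : HasStrictFDerivAt (fun p : (Fin m → E) × E => p.2) (.snd ℝ _ _) u :=
    hasStrictFDerivAt_snd
  have dXi := HasStrictFDerivAt.comp (g := (Ring.inverse : E → E)) u hasStrictFDerivAt_inverse_one dX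
  have dA : ∀ i, HasStrictFDerivAt (fun p : (Fin m → E) × E => p.1 i)
      ((ContinuousLinearMap.proj (R := ℝ) (φ := fun _ : Fin m => E) i).comp
        (.fst ℝ (Fin m → E) E)) u := fun i =>
    ((ContinuousLinearMap.proj (R := ℝ) (φ := fun _ : Fin m => E) i).comp
        (.fst ℝ (Fin m → E) E)).hasStrictFDerivAt
  have dG := fun i => absGeom_hasStrictFDerivAt (R := Rc) hRR hq1 dq (dA i) dXi rfl (by simp [u])
  have dγG := fun i => HasStrictFDerivAt.comp (g := γ) u
    (by simpa [u, absGeom_one hq1] using dγ) (dG i)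
  have dS := HasStrictFDerivAt.fun_sum (u := Finset.univ) fun i _ => (dγG i).const_smul (w i)
  have dF := dS.sub ((dX.sub (Rc.hasStrictFDerivAt.comp u dX)).const_smul (1 / 2 : ℝ))
  -- In the direction `X` the sum contributes `-R x / 2` and the correction `-(x - R x) / 2`.
  obtain ⟨L, dL, hL⟩ : ∃ L : (Fin m → E) × E →L[ℝ] E,
      HasStrictFDerivAt (fun p : (Fin m → E) × E => absEq w R q γ p.1 p.2) L u ∧
      ∀ x, L (0, x) = (-(1 / 2) : ℝ) • x := by
    refine ⟨_, dF, fun x => ?_⟩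
    have hR0 : R 0 = 0 := by simpa using hRsmul 0 0
    simp only [one_div, ContinuousLinearMap.comp_smulₛₗ, RingHom.id_apply,
      ContinuousLinearMap.neg_comp, ContinuousLinearMap.id_comp, smul_sub]
    simp [hRc, hRR, hR0]
    rw [← Finset.sum_smul, hw1]
    module
  have hinv : (L ∘L .inr ℝ (Fin m → E) E).IsInvertible := by
    refine ⟨ContinuousLinearEquiv.smulLeft (Units.mk0 (-(1 / 2) : ℝ) (by norm_num)), ?_⟩
    ext x
    simp [hL, Units.smul_def]
  have hu0 : absEq w R q γ u.1 u.2 = 0 := by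
    simp [absEq, u, absGeom_one hq1, hγ1, hR1]
  have ev := dL.eventually_apply_eq_iff_implicitFunctionOfProdDomain hinv
  have tend := dL.tendsto_implicitFunctionOfProdDomain hinv
  set ψ := dL.implicitFunctionOfProdDomain hinv
  obtain ⟨r₀, hr₀, h₀⟩ := Metric.eventually_nhds_iff.1 ev
  set r := min r₀ 1 with hr
  have hrpos : 0 < r := by positivity
  obtain ⟨s₀, hs₀, hs⟩ := Metric.eventually_nhds_iff.1 ((Metric.tendsto_nhds.1 tend) r hrpos)
  refine ⟨r, hrpos, min_le_right _ _, min s₀ r, by positivity, fun A hA => ?_⟩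
  have hAd : dist A u.1 < min s₀ r := by
    rw [dist_pi_lt_iff (by positivity)]
    intro i; rw [dist_eq_norm]; exact hA i
  have hiff : ∀ X, ‖X - 1‖ < r → (absEq w R q γ A X = 0 ↔ ψ A = X) := by
    intro X hX
    have := h₀ (y := (A, X)) (by
      rw [Prod.dist_eq, max_lt_iff]
      refine ⟨(hAd.trans_le (min_le_right _ _)).trans_le (min_le_left _ _), ?_⟩
      rw [dist_eq_norm]; exact hX.trans_le (min_le_left _ _))
    rw [hu0] at this
    exact this
  have hψ : ‖ψ A - 1‖ < r := by
    have := hs (hAd.trans_le (min_le_left _ _))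
    rwa [dist_eq_norm] at this
  exact ⟨ψ A, ⟨hψ, (hiff _ hψ).2 rfl⟩, fun X hX => ((hiff X hX.1).1 hX.2).symm⟩

end Implicit

/-! ### Strict differentiability of the functional calculus and local solvability -/

section Calculus

open Filter Topology
open scoped Matrix.Norms.Frobenius

variable {n : ℕ}

lemma fro_sq (M : Matrix (Fin n) (Fin n) ℂ) : ‖M‖ ^ 2 = ∑ i, ∑ j, ‖M i j‖ ^ 2 := by
  rw [frobenius_norm_def, ← Real.sqrt_eq_rpow, Real.sq_sqrt (by positivity)]
  simp

lemma fro_sq_trace (M : Matrix (Fin n) (Fin n) ℂ) : ((‖M‖ ^ 2 : ℝ) : ℂ) = (star M * M).trace := by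
  rw [fro_sq, Finset.sum_comm]
  simp only [Matrix.trace, Matrix.diag, Matrix.mul_apply, star_apply, Complex.ofReal_sum]
  refine Finset.sum_congr rfl fun i _ => Finset.sum_congr rfl fun j _ => ?_
  rw [Complex.star_def, Complex.conj_mul']
  push_cast; rfl

lemma fro_unitary_left {U : Matrix (Fin n) (Fin n) ℂ} (hU : star U * U = 1)
    (M : Matrix (Fin n) (Fin n) ℂ) : ‖U * M‖ = ‖M‖ := by
  have h : ((‖U * M‖ ^ 2 : ℝ) : ℂ) = ((‖M‖ ^ 2 : ℝ) : ℂ) := by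
    rw [fro_sq_trace, fro_sq_trace, star_mul]
    congr 1
    calc star M * star U * (U * M) = star M * (star U * U) * M := by noncomm_ring
      _ = _ := by rw [hU, mul_one]
  have h2 : ‖U * M‖ ^ 2 = ‖M‖ ^ 2 := by exact_mod_cast h
  exact (sq_eq_sq₀ (norm_nonneg _) (norm_nonneg _)).1 h2

lemma fro_unitary_right {U : Matrix (Fin n) (Fin n) ℂ} (hU' : U * star U = 1)
    (M : Matrix (Fin n) (Fin n) ℂ) : ‖M * U‖ = ‖M‖ := by
  rw [← norm_star, star_mul, fro_unitary_left (by simpa using hU'), norm_star]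

lemma fro_entry_le (M : Matrix (Fin n) (Fin n) ℂ) (i j : Fin n) : ‖M i j‖ ≤ ‖M‖ := by
  refine le_of_sq_le_sq ?_ (norm_nonneg _)
  rw [fro_sq]
  exact (Finset.single_le_sum (f := fun j => ‖M i j‖ ^ 2) (fun _ _ => by positivity)
    (Finset.mem_univ j)).trans
    (Finset.single_le_sum (f := fun i => ∑ j, ‖M i j‖ ^ 2) (fun _ _ => by positivity)
    (Finset.mem_univ i))

lemma norm_cj {U : Matrix (Fin n) (Fin n) ℂ} (hU : star U * U = 1) (d : Fin n → ℝ) :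
    ‖cj U d‖ = ‖(diagonal (fun i => (d i : ℂ)) : Matrix (Fin n) (Fin n) ℂ)‖ := by
  unfold cj
  rw [fro_unitary_right (by simpa using hU), fro_unitary_left hU]

/-- Eigenvalues of a Hermitian `A` are within `‖A - 1‖` of `1`. -/
lemma abs_eigenvalue_sub_one_le {A : Matrix (Fin n) (Fin n) ℂ} (hA : A.IsHermitian) (i : Fin n) :
    |hA.eigenvalues i - 1| ≤ ‖A - 1‖ := by
  obtain ⟨U, hU, hU', e, -⟩ := exists_cj hA
  have h : A - 1 = cj U (fun i => hA.eigenvalues i - 1) := by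
    conv_lhs => rw [e, ← cj_one hU', cj_sub]
  rw [h, norm_cj hU]
  have := fro_entry_le (diagonal (fun i => ((hA.eigenvalues i - 1 : ℝ) : ℂ))) i i
  rwa [diagonal_apply_eq, Complex.norm_real, Real.norm_eq_abs] at this

/-- The functional calculus of Hermitian matrices is Lipschitz for the Frobenius norm, with the
same constant as the scalar function: with `W = U*V` the entries of `U*(h(A) - h(B))V` are
`(h(aᵢ) - h(bⱼ)) W i j`. -/
lemma norm_herm_sub_le {A B : Matrix (Fin n) (Fin n) ℂ} (hA : A.IsHermitian) (hB : B.IsHermitian)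
    {h : ℝ → ℝ} {δ : ℝ} (hδ : 0 ≤ δ) (hh : ∀ i j, |h (hA.eigenvalues i) - h (hB.eigenvalues j)| ≤
      δ * |hA.eigenvalues i - hB.eigenvalues j|) :
    ‖herm h A - herm h B‖ ≤ δ * ‖A - B‖ := by
  obtain ⟨U, hU, hU', eA, fA⟩ := exists_cj hA
  obtain ⟨V, hV, hV', eB, fB⟩ := exists_cj hB
  have key : ∀ a b : Fin n → ℝ, ‖cj U a - cj V b‖ ^ 2 =
      ∑ i, ∑ j, (|a i - b j| * ‖(star U * V) i j‖) ^ 2 := by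
    intro a b
    have h1 : ‖cj U a - cj V b‖ = ‖diagonal (fun i => (a i : ℂ)) * (star U * V) -
        (star U * V) * diagonal (fun i => (b i : ℂ))‖ := by
      rw [← fro_unitary_left (U := star U) (by simpa using hU') (cj U a - cj V b),
        ← fro_unitary_right hV']
      congr 1
      unfold cj
      calc _ = (star U * U) * diagonal (fun i => (a i : ℂ)) * (star U * V) -
            (star U * V) * diagonal (fun i => (b i : ℂ)) * (star V * V) := by noncomm_ring
        _ = _ := by rw [hU, hV, one_mul, mul_one]
    rw [h1, fro_sq]
    refine Finset.sum_congr rfl fun i _ => Finset.sum_congr rfl fun j _ => ?_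
    rw [Matrix.sub_apply, diagonal_mul, mul_diagonal, mul_comm _ ((b j : ℝ) : ℂ), ← sub_mul, norm_mul,
      ← Complex.ofReal_sub, Complex.norm_real, Real.norm_eq_abs]
  refine le_of_sq_le_sq ?_ (by positivity)
  rw [mul_pow, fA, fB, key]
  conv_rhs => rw [eA, eB, key]
  rw [Finset.mul_sum]
  refine Finset.sum_le_sum fun i _ => ?_
  rw [Finset.mul_sum]
  refine Finset.sum_le_sum fun j _ => ?_
  rw [← mul_pow, ← mul_assoc]
  gcongr
  exact hh i j

/-- The projection `A ↦ (A + A*)/2` onto Hermitian matrices. -/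
noncomputable def hpart (A : Matrix (Fin n) (Fin n) ℂ) : Matrix (Fin n) (Fin n) ℂ :=
  (1 / 2 : ℝ) • (A + star A)

lemma hpart_apply (A : Matrix (Fin n) (Fin n) ℂ) : hpart A = (1 / 2 : ℝ) • (A + star A) := rfl

lemma hpart_add (A B : Matrix (Fin n) (Fin n) ℂ) : hpart (A + B) = hpart A + hpart B := by
  simp only [hpart_apply, star_add]; module

lemma hpart_smul (c : ℝ) (A : Matrix (Fin n) (Fin n) ℂ) : hpart (c • A) = c • hpart A := by
  simp [hpart_apply, star_smul, smul_comm c]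

lemma hpart_sub (A B : Matrix (Fin n) (Fin n) ℂ) : hpart (A - B) = hpart A - hpart B := by
  simp only [hpart_apply, star_sub]; module

lemma hpart_isHermitian (A : Matrix (Fin n) (Fin n) ℂ) : (hpart A).IsHermitian := by
  rw [hpart_apply, Matrix.IsHermitian, ← star_eq_conjTranspose, star_smul, star_add, star_star,
    add_comm]
  simp

lemma hpart_of_isHermitian {A : Matrix (Fin n) (Fin n) ℂ} (hA : A.IsHermitian) :
    hpart A = A := by
  rw [hpart_apply, star_eq_conjTranspose, hA.eq]; module

lemma hpart_hpart (A : Matrix (Fin n) (Fin n) ℂ) : hpart (hpart A) = hpart A :=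
  hpart_of_isHermitian (hpart_isHermitian A)

lemma norm_hpart_le (A : Matrix (Fin n) (Fin n) ℂ) : ‖hpart A‖ ≤ ‖A‖ := by
  rw [hpart_apply, norm_smul]
  have := norm_add_le A (star A)
  rw [norm_star] at this
  norm_num
  linarith

/-- The functional calculus extended to all matrices through the Hermitian part, so that it is a
function on a full normed space. -/
noncomputable def hfun (f : ℝ → ℝ) (A : Matrix (Fin n) (Fin n) ℂ) : Matrix (Fin n) (Fin n) ℂ :=
  herm f (hpart A)

lemma hfun_of_isHermitian (f : ℝ → ℝ) {A : Matrix (Fin n) (Fin n) ℂ} (hA : A.IsHermitian) :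
    hfun f A = herm f A := by rw [hfun, hpart_of_isHermitian hA]

lemma herm_one (f : ℝ → ℝ) : herm f (1 : Matrix (Fin n) (Fin n) ℂ) = f 1 • 1 := by
  have h1 : star (1 : Matrix (Fin n) (Fin n) ℂ) * 1 = 1 := by simp
  have h1' : (1 : Matrix (Fin n) (Fin n) ℂ) * star 1 = 1 := by simp
  rw [← cj_one h1', herm_cj h1 h1', cj_smul]; simp

lemma hfun_one (f : ℝ → ℝ) : hfun f (1 : Matrix (Fin n) (Fin n) ℂ) = f 1 • 1 := by
  rw [hfun_of_isHermitian _ isHermitian_one, herm_one]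

lemma herm_sub_linear (f : ℝ → ℝ) (c : ℝ) {A : Matrix (Fin n) (Fin n) ℂ} (hA : A.IsHermitian) :
    herm (fun x => f x - c * x) A = herm f A - c • A := by
  obtain ⟨U, hU, hU', e, hf⟩ := exists_cj hA
  have h1 : c • A = cj U (fun i => c * hA.eigenvalues i) := by rw [← cj_smul, ← e]
  rw [hf, hf, h1, cj_sub]

/-- Strict differentiability of the functional calculus at the identity, with derivative
`c • hpart`, in `ε`-`δ` form. -/
lemma hfun_strict {f : ℝ → ℝ} {c : ℝ} (hf : HasStrictDerivAt f c 1) :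
    ∀ δ > 0, ∃ r > 0, ∀ A B : Matrix (Fin n) (Fin n) ℂ, ‖A - 1‖ < r → ‖B - 1‖ < r →
      ‖hfun f A - hfun f B - c • hpart (A - B)‖ ≤ δ * ‖A - B‖ := by
  intro δ hδ
  have h1 := (Asymptotics.isLittleO_iff.1 hf.isLittleO) hδ
  obtain ⟨r, hr, hrb⟩ := Metric.eventually_nhds_iff.1 h1
  refine ⟨r, hr, ?_⟩
  intro A B hA hB
  have hone : hpart (1 : Matrix (Fin n) (Fin n) ℂ) = 1 := hpart_of_isHermitian isHermitian_one
  have near : ∀ C : Matrix (Fin n) (Fin n) ℂ, ‖C - 1‖ < r →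
      ∀ i, |(hpart_isHermitian C).eigenvalues i - 1| < r := by
    intro C hC i
    refine (abs_eigenvalue_sub_one_le _ i).trans_lt ?_
    rw [← hone, ← hpart_sub]
    exact (norm_hpart_le _).trans_lt hC
  have h2 := norm_herm_sub_le (hpart_isHermitian A) (hpart_isHermitian B)
    (h := fun x => f x - c * x) hδ.le (by
      intro i j
      have := hrb (y := ((hpart_isHermitian A).eigenvalues i, (hpart_isHermitian B).eigenvalues j))
        (by
          rw [Prod.dist_eq, max_lt_iff, Real.dist_eq, Real.dist_eq]
          exact ⟨near A hA i, near B hB j⟩)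
      simp only [ContinuousLinearMap.toSpanSingleton_apply, smul_eq_mul, Real.norm_eq_abs] at this
      convert this using 2
      ring)
  rw [herm_sub_linear _ _ (hpart_isHermitian A), herm_sub_linear _ _ (hpart_isHermitian B)] at h2
  have h3 : hfun f A - hfun f B - c • hpart (A - B) =
      herm f (hpart A) - c • hpart A - (herm f (hpart B) - c • hpart B) := by
    simp only [hfun, hpart_sub, smul_sub]; abel
  rw [h3]
  refine h2.trans ?_
  gcongr
  rw [← hpart_sub]
  exact norm_hpart_le _

/-- The order interval `[ε⁻¹, ε]` lies in the Frobenius ball of radius `n (ε - 1)` around `1`. -/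
lemma norm_sub_one_le {A : Matrix (Fin n) (Fin n) ℂ} (hA : A.IsHermitian) {ε : ℝ} (hε : 1 < ε)
    (h1 : (A - ε⁻¹ • (1 : Matrix (Fin n) (Fin n) ℂ)).PosSemidef)
    (h2 : (ε • (1 : Matrix (Fin n) (Fin n) ℂ) - A).PosSemidef) : ‖A - 1‖ ≤ n * (ε - 1) := by
  obtain ⟨U, hU, hU', e, -⟩ := exists_cj hA
  set d := hA.eigenvalues
  rw [e, one_eq_smul_cj hU', cj_sub, cj_posSemidef hU] at h1 h2
  rw [e, ← cj_one hU', cj_sub, norm_cj hU]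
  have hinv : 2 - ε ≤ ε⁻¹ := by
    rw [← one_div, le_div_iff₀ (by linarith)]
    nlinarith [sq_nonneg (ε - 1)]
  have hd : ∀ i, |d i - 1| ≤ ε - 1 := fun i => by
    rw [abs_le]; constructor <;> linarith [h1 i, h2 i]
  refine le_of_sq_le_sq ?_ (mul_nonneg (Nat.cast_nonneg n) (by linarith))
  rw [fro_sq]
  calc _ = ∑ i, |d i - 1| ^ 2 := by
        refine Finset.sum_congr rfl fun i _ => ?_
        rw [Finset.sum_eq_single i]
        · rw [diagonal_apply_eq, Complex.norm_real, Real.norm_eq_abs]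
        · intro j _ hj; rw [diagonal_apply_ne _ hj.symm]; simp
        · simp
    _ ≤ ∑ _i : Fin n, (ε - 1) ^ 2 := Finset.sum_le_sum fun i _ => by gcongr; exact hd i
    _ = n * (ε - 1) ^ 2 := by simp
    _ ≤ (n * (ε - 1)) ^ 2 := by
        rw [mul_pow]
        gcongr
        exact_mod_cast Nat.le_self_pow two_ne_zero n

lemma absGeom_eq_geom {A B : Matrix (Fin n) (Fin n) ℂ} (hA : A.PosDef) (hB : B.PosDef) :
    absGeom (hfun Real.sqrt) A B = geom A B := by
  have h1 : hfun Real.sqrt A = msqrt A := hfun_of_isHermitian _ hA.isHermitian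
  have h2 := posDef_conj_s19 (msqrt_spec hA).1.inv hB
  rw [absGeom, h1, ← Matrix.nonsing_inv_eq_ringInverse, hfun_of_isHermitian _ h2.isHermitian]
  rfl

lemma absEq_eq {m : ℕ} (w : Fin m → ℝ) (g : ℝ → ℝ) {A : Fin m → Matrix (Fin n) (Fin n) ℂ}
    (hA : ∀ i, (A i).PosDef) {X : Matrix (Fin n) (Fin n) ℂ} (hX : X.PosDef) :
    absEq w hpart (hfun Real.sqrt) (hfun g) A X = ∑ i, w i • herm g (geom (A i) X⁻¹) := by
  rw [absEq, hpart_of_isHermitian hX.isHermitian, sub_self, smul_zero, sub_zero]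
  refine Finset.sum_congr rfl fun i _ => ?_
  rw [← Matrix.nonsing_inv_eq_ringInverse, absGeom_eq_geom (hA i) hX.inv,
    hfun_of_isHermitian _ (geom_spec (hA i) hX.inv).1.isHermitian]

/-- A zero of `absEq` is automatically Hermitian: all terms but `X - hpart X`, which is
skew-Hermitian, are Hermitian. -/
lemma isHermitian_of_absEq {m : ℕ} {w : Fin m → ℝ} {g : ℝ → ℝ}
    {A : Fin m → Matrix (Fin n) (Fin n) ℂ} {X : Matrix (Fin n) (Fin n) ℂ}
    (h : absEq w hpart (hfun Real.sqrt) (hfun g) A X = 0) : X.IsHermitian := by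
  rw [absEq] at h
  set H := ∑ i, w i • hfun g (absGeom (hfun Real.sqrt) (A i) (Ring.inverse X)) with hH
  have hHh : hpart H = H := by
    refine hpart_of_isHermitian ?_
    rw [Matrix.IsHermitian, hH, Matrix.conjTranspose_sum]
    refine Finset.sum_congr rfl fun i _ => ?_
    rw [Matrix.conjTranspose_smul, star_trivial, hfun, (herm_isHermitian g _).eq]
  have h1 := congrArg hpart h
  rw [hpart_sub, hpart_smul, hpart_sub, hpart_hpart, sub_self, smul_zero, sub_zero, hHh] at h1
  have h2 : hpart (0 : Matrix (Fin n) (Fin n) ℂ) = 0 := by simp [hpart_apply]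
  rw [h1, h2, zero_sub, neg_eq_zero, smul_eq_zero] at h
  have h3 : X = hpart X := by
    rcases h with h | h
    · norm_num at h
    · exact sub_eq_zero.1 h
  rw [h3]
  exact hpart_isHermitian X

lemma posDef_of_near_one {X : Matrix (Fin n) (Fin n) ℂ} (hX : X.IsHermitian) (h : ‖X - 1‖ < 1) :
    X.PosDef := by
  rw [hX.posDef_iff_eigenvalues_pos]
  intro i
  have := (abs_lt.1 ((abs_eigenvalue_sub_one_le hX i).trans_lt h)).1
  linarith

lemma matrix_existsUnique {g : ℝ → ℝ} (hg : HasStrictDerivAt g 1 1) (hg_one : g 1 = 0)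
    {m : ℕ} {w : Fin m → ℝ} (hw1 : ∑ i, w i = 1) (n : ℕ) :
    ∃ r, 0 < r ∧ r ≤ 1 ∧ ∃ s > 0, ∀ A : Fin m → Matrix (Fin n) (Fin n) ℂ, (∀ i, ‖A i - 1‖ < s) →
      ∃! X, ‖X - 1‖ < r ∧ absEq w hpart (hfun Real.sqrt) (hfun g) A X = 0 := by
  have hsq : HasStrictDerivAt Real.sqrt (1 / 2) 1 := by
    have := Real.hasStrictDerivAt_sqrt (x := 1) one_ne_zero
    simpa using this
  have : CompleteSpace (Matrix (Fin n) (Fin n) ℂ) := FiniteDimensional.complete ℝ _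
  exact absEq_existsUnique hw1 hpart_add hpart_smul norm_hpart_le hpart_hpart
    (hpart_of_isHermitian isHermitian_one) (by simp [hfun_one]) (by simp [hfun_one, hg_one])
    (hfun_strict hsq) (hfun_strict hg)

/-- The norm-free form of local existence and uniqueness: for `Aᵢ` in a small order interval around
the identity there is a solution, and two solutions in that interval agree. -/
lemma exists_interval {g : ℝ → ℝ} (hg : HasStrictDerivAt g 1 1) (hg_one : g 1 = 0)
    {m : ℕ} {w : Fin m → ℝ} (hw1 : ∑ i, w i = 1) (n : ℕ) :
    ∃ ε : ℝ, 1 < ε ∧ ∀ A : Fin m → Matrix (Fin n) (Fin n) ℂ, (∀ i, (A i).PosDef) →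
      (∀ i, (A i - ε⁻¹ • (1 : Matrix (Fin n) (Fin n) ℂ)).PosSemidef ∧
        (ε • (1 : Matrix (Fin n) (Fin n) ℂ) - A i).PosSemidef) →
      (∃ X, X.PosDef ∧ ∑ i, w i • herm g (geom (A i) X⁻¹) = 0) ∧
      ∀ X Y, X.PosDef → Y.PosDef →
        ((X - ε⁻¹ • (1 : Matrix (Fin n) (Fin n) ℂ)).PosSemidef ∧
          (ε • (1 : Matrix (Fin n) (Fin n) ℂ) - X).PosSemidef) →
        ((Y - ε⁻¹ • (1 : Matrix (Fin n) (Fin n) ℂ)).PosSemidef ∧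
          (ε • (1 : Matrix (Fin n) (Fin n) ℂ) - Y).PosSemidef) →
        ∑ i, w i • herm g (geom (A i) X⁻¹) = 0 → ∑ i, w i • herm g (geom (A i) Y⁻¹) = 0 →
        X = Y := by
  obtain ⟨r, hr, hr1, s, hs, key⟩ := matrix_existsUnique hg hg_one hw1 n
  -- By `norm_sub_one_le` the order interval for `ε = 1 + ρ / (n + 1)` lies in the `ρ`-ball at `1`.
  set ρ := min r s with hρ
  have hρ0 : 0 < ρ := by positivity
  have hε : 1 < 1 + ρ / (n + 1) := by
    have : 0 < ρ / (n + 1) := by positivity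
    linarith
  have near : ∀ {C : Matrix (Fin n) (Fin n) ℂ}, C.PosDef →
      ((C - (1 + ρ / (n + 1))⁻¹ • (1 : Matrix (Fin n) (Fin n) ℂ)).PosSemidef ∧
        ((1 + ρ / (n + 1)) • (1 : Matrix (Fin n) (Fin n) ℂ) - C).PosSemidef) → ‖C - 1‖ < ρ := by
    intro C hC h
    refine (norm_sub_one_le hC.isHermitian hε h.1 h.2).trans_lt ?_
    rw [add_sub_cancel_left, ← mul_div_assoc, div_lt_iff₀ (by positivity)]
    linarith
  refine ⟨1 + ρ / (n + 1), hε, fun A hA hAε => ?_⟩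
  obtain ⟨X, ⟨hXr, hX0⟩, huniq⟩ := key A fun i => (near (hA i) (hAε i)).trans_le (min_le_right _ _)
  have hX : X.PosDef := posDef_of_near_one (isHermitian_of_absEq hX0) (hXr.trans_le hr1)
  refine ⟨⟨X, hX, by rw [← absEq_eq w g hA hX, hX0]⟩, ?_⟩
  intro Y Z hY hZ hYε hZε hY0 hZ0
  rw [huniq Y ⟨(near hY hYε).trans_le (min_le_left _ _), by rw [absEq_eq w g hA hY, hY0]⟩,
    huniq Z ⟨(near hZ hZε).trans_le (min_le_left _ _), by rw [absEq_eq w g hA hZ, hZ0]⟩]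

end Calculus

theorem stmt19 (g : ℝ → ℝ)
    (hg_cont : ContinuousOn g (Set.Ioi 0))
    (hg_mono : StrictMonoOn g (Set.Ioi 0))
    (hg_one : g 1 = 0) (hg_deriv : HasDerivAt g 1 1)
    (hg_opmono : ∀ (k : ℕ) (A B : Matrix (Fin k) (Fin k) ℂ),
      A.PosDef → B.PosDef → (B - A).PosSemidef → (herm g B - herm g A).PosSemidef)
    {m n : ℕ} (w : Fin m → ℝ) (hw : ∀ i, 0 < w i) (hw1 : ∑ i, w i = 1) :
    ∃ ε : ℝ, 1 < ε ∧
      ∀ A : Fin m → Matrix (Fin n) (Fin n) ℂ, (∀ i, (A i).PosDef) →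
        (∀ i, (A i - ε⁻¹ • (1 : Matrix (Fin n) (Fin n) ℂ)).PosSemidef ∧
               (ε • (1 : Matrix (Fin n) (Fin n) ℂ) - A i).PosSemidef) →
        (∃! X : Matrix (Fin n) (Fin n) ℂ, X.PosDef ∧
            ∑ i, w i • herm g (geom (A i) X⁻¹) = 0) ∧
        ∀ X : Matrix (Fin n) (Fin n) ℂ, X.PosDef →
          ∑ i, w i • herm g (geom (A i) X⁻¹) = 0 →
          (X - ε⁻¹ • (1 : Matrix (Fin n) (Fin n) ℂ)).PosSemidef ∧
          (ε • (1 : Matrix (Fin n) (Fin n) ℂ) - X).PosSemidef := by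
  have hconc := concaveOn_of_opmono hg_cont (hg_opmono 2)
  obtain ⟨ε, hε, hloc⟩ :=
    exists_interval (hasStrictDerivAt_of_concave hconc hg_deriv) hg_one hw1 n
  refine ⟨ε, hε, fun A hA hAε => ?_⟩
  obtain ⟨⟨X, hX, hX0⟩, huniq⟩ := hloc A hA hAε
  have hb : ∀ X : Matrix (Fin n) (Fin n) ℂ, X.PosDef →
      ∑ i, w i • herm g (geom (A i) X⁻¹) = 0 →
      (X - ε⁻¹ • (1 : Matrix (Fin n) (Fin n) ℂ)).PosSemidef ∧
      (ε • (1 : Matrix (Fin n) (Fin n) ℂ) - X).PosSemidef := fun X hX h =>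
    ⟨le_solution hg_mono hg_one (hg_opmono n) hw hw1 hA (by positivity) (fun i => (hAε i).1) hX h,
      solution_le hg_mono hg_one (hg_opmono n) hw hw1 hA (by positivity) (fun i => (hAε i).2) hX h⟩
  exact ⟨⟨X, ⟨hX, hX0⟩, fun Y hY =>
    huniq Y X hY.1 hX (hb Y hY.1 hY.2) (hb X hX hX0) hY.2 hX0⟩, hb⟩
end
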